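/- Variational representation of the Jensen–Shannon divergence: let P and Q be strictly positive pmfs on a finite type X, let M = (P+Q)/2, and define the Jensen–Shannon divergence JS(P‖Q) = (1/2)·D(P‖M) + (1/2)·D(Q‖M). Then the supremum over all discriminators d : X → (0,1) of the objective Σ_x P(x)·log d(x) + Σ_x Q(x)·log(1−d(x)) equals 2·JS(P‖Q) − 2·log 2, and this supremum is attained at d*(x) = P(x)/(P(x)+Q(x)). Equivalently, JS(P‖Q) = log 2 + (1/2)·sup_d ( Σ_x P(x)·log d(x) + Σ_x Q(x)·log(1−d(x)) ). -/

import Mathlib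

/-- The tangent-line bound `log u ≤ u - 1` at `u = s * t / a`, scaled by `a`. -/
lemma mul_log_le_mul_log_div_add {a s t : ℝ} (ha : 0 < a) (hs : 0 < s) (ht : 0 < t) :
    a * Real.log t ≤ a * Real.log (a / s) + (s * t - a) := by
  have h := mul_le_mul_of_nonneg_left
    (Real.log_le_sub_one_of_pos (x := s * t / a) (by positivity)) ha.le
  rw [Real.log_div (by positivity) ha.ne', Real.log_mul hs.ne' ht.ne', mul_sub a (s * t / a),
    mul_div_cancel₀ _ ha.ne'] at h
  rw [Real.log_div ha.ne' hs.ne']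
  linarith

lemma one_sub_div_add_eq {a b : ℝ} (h : a + b ≠ 0) : 1 - a / (a + b) = b / (a + b) := by
  rw [one_sub_div h, add_sub_cancel_left]

/-- Weighted binary log-loss is optimised by `a / (a + b)`. -/
lemma mul_log_add_mul_log_one_sub_le {a b t : ℝ} (ha : 0 < a) (hb : 0 < b)
    (ht0 : 0 < t) (ht1 : t < 1) :
    a * Real.log t + b * Real.log (1 - t) ≤
      a * Real.log (a / (a + b)) + b * Real.log (1 - a / (a + b)) := by
  have hs : 0 < a + b := add_pos ha hb
  rw [one_sub_div_add_eq hs.ne']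
  linarith [mul_log_le_mul_log_div_add ha hs ht0,
    mul_log_le_mul_log_div_add hb hs (sub_pos.2 ht1)]

lemma sum_mul_log_div_half {X : Type*} [Fintype X] {p s : X → ℝ}
    (hp : ∀ x, 0 < p x) (hs : ∀ x, 0 < s x) (hp1 : ∑ x, p x = 1) :
    ∑ x, p x * Real.log (p x / (s x / 2)) =
      ∑ x, p x * Real.log (p x / s x) + Real.log 2 := by
  rw [← one_mul (Real.log 2), ← hp1, Finset.sum_mul, ← Finset.sum_add_distrib]
  refine Finset.sum_congr rfl fun x _ => ?_
  rw [div_div_eq_mul_div, mul_div_right_comm,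
    Real.log_mul (div_pos (hp x) (hs x)).ne' two_ne_zero, mul_add]

/-- Variational representation of the Jensen–Shannon divergence: the supremum
of the discrimination objective over discriminators `d : X → (0,1)` is attained
at `d*(x) = P(x)/(P(x)+Q(x))` and equals `2·JS(P‖Q) − 2·log 2`. -/
theorem js_variational_representation
    {X : Type*} [Fintype X]
    (P Q : X → ℝ)
    (hP0 : ∀ x, 0 < P x) (hP1 : ∑ x : X, P x = 1)
    (hQ0 : ∀ x, 0 < Q x) (hQ1 : ∑ x : X, Q x = 1) :
    IsGreatest
      {v : ℝ | ∃ d : X → ℝ, (∀ x, 0 < d x ∧ d x < 1) ∧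
        v = (∑ x : X, P x * Real.log (d x)) + (∑ x : X, Q x * Real.log (1 - d x))}
      ((∑ x : X, P x * Real.log (P x / (P x + Q x)))
        + (∑ x : X, Q x * Real.log (1 - P x / (P x + Q x))))
    ∧
    ((∑ x : X, P x * Real.log (P x / (P x + Q x)))
        + (∑ x : X, Q x * Real.log (1 - P x / (P x + Q x))))
      = 2 * ((1 / 2) * (∑ x : X, P x * Real.log (P x / ((P x + Q x) / 2)))
            + (1 / 2) * (∑ x : X, Q x * Real.log (Q x / ((P x + Q x) / 2))))
        - 2 * Real.log 2 := by
  have hS : ∀ x, 0 < P x + Q x := fun x => add_pos (hP0 x) (hQ0 x)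
  refine ⟨⟨⟨fun x => P x / (P x + Q x), fun x => ⟨div_pos (hP0 x) (hS x), ?_⟩, rfl⟩, ?_⟩, ?_⟩
  · exact (div_lt_one (hS x)).2 (lt_add_of_pos_right _ (hQ0 x))
  · rintro v ⟨d, hd, rfl⟩
    rw [← Finset.sum_add_distrib, ← Finset.sum_add_distrib]
    exact Finset.sum_le_sum fun x _ =>
      mul_log_add_mul_log_one_sub_le (hP0 x) (hQ0 x) (hd x).1 (hd x).2
  · rw [sum_mul_log_div_half hP0 hS hP1, sum_mul_log_div_half hQ0 hS hQ1]
    simp only [one_sub_div_add_eq (hS _).ne']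
    ring
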